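/- Let p > 0, σ_x > 0, σ_n > 0, K, M ∈ ℕ, S ∈ ℝ^{M×K}. Let x be a random vector in ℝ^K with i.i.d. entries N(0, σ_x²) and n a random vector in ℝ^M with i.i.d. entries N(0, σ_n²), independent of x. Set C = E[φ_p(x)φ_p(x)ᵀ], 𝐌 = E[vec(φ_p(x)φ_p(x)ᵀ) vec(φ_p(x)φ_p(x)ᵀ)ᵀ], and N = E[vec(n nᵀ) vec(n nᵀ)ᵀ]. Then the mean squared error of the energy-detector estimate satisfies E[ ( Σ_{k=1}^K |x_k|^p − ‖S φ_p(x) + n‖₂² )² ] = tr{𝐌(SᵀS ⊗ SᵀS)} − 2 tr{𝐌(I_K ⊗ SᵀS)} + tr{𝐌} + 4σ_n² tr{C SᵀS} + tr{N} − 2 M σ_n² tr{C(I_K − SᵀS)}. -/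

import Mathlib

open Matrix MeasureTheory ProbabilityTheory
open scoped Kronecker

/-- Pre-processing map `φ_p : ℝ^K → ℝ^K`, `(φ_p x)_k = |x_k|^(p/2)`. -/
noncomputable def phi (p : ℝ) {K : ℕ} (x : Fin K → ℝ) : Fin K → ℝ :=
  fun k => |x k| ^ (p / 2)

/-- Column-major vectorization of a square matrix: `vec(A)(j,i) = A i j`. -/
def vecc {K : ℕ} (A : Matrix (Fin K) (Fin K) ℝ) : Fin K × Fin K → ℝ :=
  fun q => A q.2 q.1

/-- Law of a random vector in `ℝ^K` with i.i.d. entries `N(0, σ²)`. -/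
noncomputable def gaussPi (K : ℕ) (σ : ℝ) : Measure (Fin K → ℝ) :=
  Measure.pi fun _ => gaussianReal 0 (σ ^ 2).toNNReal

/-- Joint law of independent `x` (i.i.d. `N(0,σx²)` entries) and `n` (i.i.d. `N(0,σn²)` entries). -/
noncomputable def jointMeas (K M : ℕ) (σx σn : ℝ) :
    Measure ((Fin K → ℝ) × (Fin M → ℝ)) :=
  (gaussPi K σx).prod (gaussPi M σn)

/-- Second-moment matrix `C = E[φ_p(x) φ_p(x)ᵀ]`. -/
noncomputable def Cmat (p σ : ℝ) (K : ℕ) : Matrix (Fin K) (Fin K) ℝ :=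
  Matrix.of fun i j => ∫ x, phi p x i * phi p x j ∂(gaussPi K σ)

/-- Fourth-moment matrix `𝐌 = E[vec(φ_p(x)φ_p(x)ᵀ) vec(φ_p(x)φ_p(x)ᵀ)ᵀ]`. -/
noncomputable def Mmat (p σ : ℝ) (K : ℕ) : Matrix (Fin K × Fin K) (Fin K × Fin K) ℝ :=
  Matrix.of fun q r =>
    ∫ x, vecc (vecMulVec (phi p x) (phi p x)) q * vecc (vecMulVec (phi p x) (phi p x)) r
      ∂(gaussPi K σ)

/-- Noise fourth-moment matrix `N = E[vec(n nᵀ) vec(n nᵀ)ᵀ]`. -/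
noncomputable def Nmat (σ : ℝ) (M : ℕ) : Matrix (Fin M × Fin M) (Fin M × Fin M) ℝ :=
  Matrix.of fun q r =>
    ∫ n, vecc (vecMulVec n n) q * vecc (vecMulVec n n) r ∂(gaussPi M σ)

/-! Write `X = φ_p(x)` for the signal and `N` for the noise. The error is `A - 2T - Q`, where
`A = X ⬝ᵥ (I - SᵀS) X` depends on the signal only, `Q = N ⬝ᵥ N` on the noise only, and
`T = S X ⬝ᵥ N` is the cross term. All three are in `L²`, so the square may be expanded under the
expectation. Independence factors `E[AQ]`, `E[T²]`, `E[AT]` and `E[TQ]`; the last two vanish because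
the odd moments of the noise do, and the others become traces because `v ⬝ᵥ G v` and
`(v ⬝ᵥ G v) * (v ⬝ᵥ H v)` are linear in `v vᵀ` and `vec(v vᵀ) vec(v vᵀ)ᵀ`. -/

section Algebra

variable {R ι κ : Type*} [CommRing R]

theorem one_sub_kronecker_one_sub [DecidableEq ι] (A : Matrix ι ι R) :
    (1 - A : Matrix ι ι R) ⊗ₖ (1 - A : Matrix ι ι R) = A ⊗ₖ A - 1 ⊗ₖ A - A ⊗ₖ 1 + 1 := by
  rw [← one_kronecker_one]
  ext q r
  simp only [kroneckerMap_apply, Matrix.sub_apply, Matrix.add_apply]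
  ring

variable [Fintype ι] [Fintype κ]

theorem sum_sq_eq_dotProduct_self (v : ι → R) : ∑ i, v i ^ 2 = v ⬝ᵥ v := by
  simp only [dotProduct, sq]

theorem dotProduct_transpose_mul_mul_mulVec (S : Matrix κ ι R) (B : Matrix κ κ R) (v : ι → R) :
    v ⬝ᵥ (Sᵀ * B * S) *ᵥ v = S *ᵥ v ⬝ᵥ B *ᵥ (S *ᵥ v) := by
  rw [← mulVec_mulVec, ← mulVec_mulVec, dotProduct_mulVec, vecMul_transpose]

theorem vec_vecMulVec_dotProduct_vec_vecMulVec (v w : ι → R) (x y : κ → R) :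
    vec (vecMulVec v x) ⬝ᵥ vec (vecMulVec w y) = (v ⬝ᵥ w) * (x ⬝ᵥ y) := by
  rw [vec_dotProduct_vec, transpose_vecMulVec, vecMulVec_mul_vecMulVec, trace_vecMulVec,
    dotProduct_smul, smul_eq_mul]

theorem vec_dotProduct_kronecker_mulVec_vec (A B : Matrix ι ι R) (v : ι → R) :
    vec (vecMulVec v v) ⬝ᵥ (A ⊗ₖ B) *ᵥ vec (vecMulVec v v)
      = (v ⬝ᵥ A *ᵥ v) * (v ⬝ᵥ B *ᵥ v) := by
  rw [kronecker_mulVec_vec, mul_vecMulVec, vecMulVec_mul, vecMul_transpose,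
    vec_vecMulVec_dotProduct_vec_vecMulVec, mul_comm]

theorem dotProduct_self_sub_dotProduct_self_mulVec_add [DecidableEq ι] (S : Matrix κ ι R)
    (v : ι → R) (w : κ → R) :
    v ⬝ᵥ v - (S *ᵥ v + w) ⬝ᵥ (S *ᵥ v + w)
      = v ⬝ᵥ (1 - Sᵀ * S) *ᵥ v - 2 * (S *ᵥ v ⬝ᵥ w) - w ⬝ᵥ w := by
  have gram : v ⬝ᵥ (Sᵀ * S) *ᵥ v = S *ᵥ v ⬝ᵥ S *ᵥ v := by
    rw [← mulVec_mulVec, dotProduct_mulVec, vecMul_transpose]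
  rw [sub_mulVec, one_mulVec, dotProduct_sub, gram, add_dotProduct, dotProduct_add, dotProduct_add,
    dotProduct_comm w (S *ᵥ v)]
  ring

end Algebra

section Integrability

variable {Ω ι κ : Type*} [MeasurableSpace Ω] {P : Measure Ω} [Fintype ι] [Fintype κ]
  {p q r : ENNReal} {X : Ω → ι → ℝ}

instance holderTriple_four_four_two : ENNReal.HolderTriple 4 4 2 where
  inv_add_inv_eq_inv := by
    rw [show (4 : ENNReal) = 2 * 2 by norm_num, ENNReal.mul_inv (by simp) (by simp), ← mul_add,
      ENNReal.inv_two_add_inv_two, mul_one]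

theorem memLp_dotProduct [ENNReal.HolderTriple p q r] {Y : Ω → ι → ℝ}
    (hX : MemLp X p P) (hY : MemLp Y q P) : MemLp (fun ω => X ω ⬝ᵥ Y ω) r P :=
  memLp_finsetSum _ fun i _ => (hY.eval i).mul' (hX.eval i)

theorem memLp_mulVec (S : Matrix κ ι ℝ) (hX : MemLp X p P) : MemLp (fun ω => S *ᵥ X ω) p P :=
  S.mulVecLin.toContinuousLinearMap.comp_memLp' hX

theorem memLp_vec_vecMulVec [ENNReal.HolderTriple p q r] {Y : Ω → κ → ℝ}
    (hX : MemLp X p P) (hY : MemLp Y q P) :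
    MemLp (fun ω => vec (vecMulVec (X ω) (Y ω))) r P :=
  memLp_pi_iff.2 fun i => (hY.eval i.1).mul' (hX.eval i.2)

theorem integral_sub_two_mul_sub_sq {f g h : Ω → ℝ} (hf : MemLp f 2 P) (hg : MemLp g 2 P)
    (hh : MemLp h 2 P) :
    ∫ ω, (f ω - 2 * g ω - h ω) ^ 2 ∂P
      = ∫ ω, f ω ^ 2 ∂P + 4 * ∫ ω, g ω ^ 2 ∂P + ∫ ω, h ω ^ 2 ∂P - 4 * ∫ ω, f ω * g ω ∂P
        - 2 * ∫ ω, f ω * h ω ∂P + 4 * ∫ ω, h ω * g ω ∂P := by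
  have hff : Integrable (fun ω => f ω ^ 2) P := hf.integrable_sq
  have hgg : Integrable (fun ω => g ω ^ 2) P := hg.integrable_sq
  have hhh : Integrable (fun ω => h ω ^ 2) P := hh.integrable_sq
  have hfg : Integrable (fun ω => f ω * g ω) P := hf.integrable_mul hg
  have hfh : Integrable (fun ω => f ω * h ω) P := hf.integrable_mul hh
  have hhg : Integrable (fun ω => h ω * g ω) P := hh.integrable_mul hg
  have expand (ω : Ω) : (f ω - 2 * g ω - h ω) ^ 2
      = f ω ^ 2 + 4 * g ω ^ 2 + h ω ^ 2 - 4 * (f ω * g ω) - 2 * (f ω * h ω)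
        + 4 * (h ω * g ω) := by
    ring
  simp_rw [expand]
  rw [integral_add (by fun_prop) (by fun_prop), integral_sub (by fun_prop) (by fun_prop),
    integral_sub (by fun_prop) (by fun_prop), integral_add (by fun_prop) hhh,
    integral_add hff (by fun_prop)]
  simp only [integral_const_mul]

end Integrability

section Moments

variable {Ω ι κ : Type*} [MeasurableSpace Ω] {P : Measure Ω} {X : Ω → ι → ℝ}

/-- The matrix `E[X Xᵀ]` of second moments of a random vector `X`. The vector is not centered, so
this is the covariance matrix only when `X` has mean zero. -/
noncomputable def secondMoment (X : Ω → ι → ℝ) (P : Measure Ω) : Matrix ι ι ℝ :=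
  of fun i j => ∫ ω, X ω i * X ω j ∂P

/-- The matrix `E[vec(X Xᵀ) vec(X Xᵀ)ᵀ]` of fourth moments of a random vector `X`, indexed by pairs
of coordinates. -/
noncomputable def fourthMoment (X : Ω → ι → ℝ) (P : Measure Ω) : Matrix (ι × ι) (ι × ι) ℝ :=
  secondMoment (fun ω => vec (vecMulVec (X ω) (X ω))) P

theorem secondMoment_apply (X : Ω → ι → ℝ) (P : Measure Ω) (i j : ι) :
    secondMoment X P i j = ∫ ω, X ω i * X ω j ∂P :=
  rfl

theorem secondMoment_transpose (X : Ω → ι → ℝ) (P : Measure Ω) :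
    (secondMoment X P)ᵀ = secondMoment X P := by
  ext i j
  simp only [transpose_apply, secondMoment_apply, mul_comm]

variable [Fintype ι] [Fintype κ]

theorem trace_secondMoment_mul (hX : MemLp X 2 P) (B : Matrix ι ι ℝ) :
    (secondMoment X P * B).trace = ∫ ω, X ω ⬝ᵥ B *ᵥ X ω ∂P := by
  have hint (i j : ι) : Integrable (fun ω => X ω i * X ω j * B j i) P :=
    ((hX.eval i).integrable_mul (hX.eval j)).mul_const (B j i)
  calc (secondMoment X P * B).trace
      = ∑ i, ∑ j, ∫ ω, X ω i * X ω j * B j i ∂P := by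
        simp only [trace, diag_apply, mul_apply, secondMoment_apply, integral_mul_const]
    _ = ∫ ω, ∑ i, ∑ j, X ω i * X ω j * B j i ∂P := by
        rw [integral_finsetSum _ fun i _ => integrable_finsetSum _ fun j _ => hint i j]
        simp_rw [integral_finsetSum _ fun j _ => hint _ j]
    _ = ∫ ω, X ω ⬝ᵥ B *ᵥ X ω ∂P := by
        congr! 2 with ω
        simp only [dotProduct, mulVec, Finset.mul_sum]
        rw [Finset.sum_comm]
        congr! 2
        ring

theorem trace_secondMoment (hX : MemLp X 2 P) :
    (secondMoment X P).trace = ∫ ω, X ω ⬝ᵥ X ω ∂P := by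
  classical
  simpa only [mul_one, one_mulVec] using trace_secondMoment_mul hX 1

theorem trace_secondMoment_mulVec_mul (hX : MemLp X 2 P) (S : Matrix κ ι ℝ) (B : Matrix κ κ ℝ) :
    (secondMoment (fun ω => S *ᵥ X ω) P * B).trace
      = (secondMoment X P * (Sᵀ * B * S)).trace := by
  simp_rw [trace_secondMoment_mul (memLp_mulVec S hX), trace_secondMoment_mul hX,
    dotProduct_transpose_mul_mul_mulVec]

theorem trace_fourthMoment_mul_kronecker (hX : MemLp X 4 P) (A B : Matrix ι ι ℝ) :
    (fourthMoment X P * (A ⊗ₖ B)).trace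
      = ∫ ω, (X ω ⬝ᵥ A *ᵥ X ω) * (X ω ⬝ᵥ B *ᵥ X ω) ∂P := by
  simp_rw [fourthMoment, trace_secondMoment_mul (memLp_vec_vecMulVec hX hX),
    vec_dotProduct_kronecker_mulVec_vec]

theorem trace_fourthMoment (hX : MemLp X 4 P) :
    (fourthMoment X P).trace = ∫ ω, (X ω ⬝ᵥ X ω) ^ 2 ∂P := by
  simp_rw [fourthMoment, trace_secondMoment (memLp_vec_vecMulVec hX hX),
    vec_vecMulVec_dotProduct_vec_vecMulVec, sq]

theorem trace_fourthMoment_mul_one_sub_kronecker_one_sub [DecidableEq ι] (hX : MemLp X 4 P)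
    (A : Matrix ι ι ℝ) :
    (fourthMoment X P * ((1 - A : Matrix ι ι ℝ) ⊗ₖ (1 - A : Matrix ι ι ℝ))).trace
      = (fourthMoment X P * (A ⊗ₖ A)).trace
        - 2 * (fourthMoment X P * ((1 : Matrix ι ι ℝ) ⊗ₖ A)).trace
        + (fourthMoment X P).trace := by
  have comm : (fourthMoment X P * (A ⊗ₖ (1 : Matrix ι ι ℝ))).trace
      = (fourthMoment X P * ((1 : Matrix ι ι ℝ) ⊗ₖ A)).trace := by
    simp_rw [trace_fourthMoment_mul_kronecker hX, mul_comm]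
  rw [one_sub_kronecker_one_sub, mul_add, mul_sub, mul_sub, mul_one, trace_add, trace_sub,
    trace_sub, comm]
  ring

end Moments

section Independence

variable {Ω ι κ : Type*} [MeasurableSpace Ω] {P : Measure Ω} [Fintype ι] [Fintype κ]

theorem integral_dotProduct_of_indepFun {Y Z : Ω → ι → ℝ} (hYZ : Y ⟂ᵢ[P] Z)
    (hY : AEStronglyMeasurable Y P) (hZ : AEStronglyMeasurable Z P)
    (hint : ∀ i, Integrable (fun ω => Y ω i * Z ω i) P) :
    ∫ ω, Y ω ⬝ᵥ Z ω ∂P = (fun i => ∫ ω, Y ω i ∂P) ⬝ᵥ fun i => ∫ ω, Z ω i ∂P := by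
  simp only [dotProduct]
  rw [integral_finsetSum _ fun i _ => hint i]
  refine Finset.sum_congr rfl fun i _ => ?_
  exact (hYZ.comp (measurable_pi_apply i) (measurable_pi_apply i)).integral_fun_mul_eq_mul_integral
    ((continuous_apply i).comp_aestronglyMeasurable hY)
    ((continuous_apply i).comp_aestronglyMeasurable hZ)

theorem integral_dotProduct_sq_of_indepFun {Y Z : Ω → ι → ℝ} (hYZ : Y ⟂ᵢ[P] Z)
    (hY : MemLp Y 4 P) (hZ : MemLp Z 4 P) :
    ∫ ω, (Y ω ⬝ᵥ Z ω) ^ 2 ∂P = (secondMoment Y P * secondMoment Z P).trace := by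
  have hYY : MemLp (fun ω => vec (vecMulVec (Y ω) (Y ω))) 2 P := memLp_vec_vecMulVec hY hY
  have hZZ : MemLp (fun ω => vec (vecMulVec (Z ω) (Z ω))) 2 P := memLp_vec_vecMulVec hZ hZ
  have meas : Measurable fun v : ι → ℝ => vec (vecMulVec v v) :=
    measurable_pi_lambda _ fun q => (measurable_pi_apply q.2).mul (measurable_pi_apply q.1)
  calc ∫ ω, (Y ω ⬝ᵥ Z ω) ^ 2 ∂P
      = ∫ ω, vec (vecMulVec (Y ω) (Y ω)) ⬝ᵥ vec (vecMulVec (Z ω) (Z ω)) ∂P := by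
        simp_rw [vec_vecMulVec_dotProduct_vec_vecMulVec, sq]
    _ = vec (secondMoment Y P) ⬝ᵥ vec (secondMoment Z P) :=
        integral_dotProduct_of_indepFun (hYZ.comp meas meas) hYY.1 hZZ.1
          fun q => (hYY.eval q).integrable_mul (hZZ.eval q)
    _ = (secondMoment Y P * secondMoment Z P).trace := by
        rw [vec_dotProduct_vec, secondMoment_transpose]

theorem integral_dotProduct_eq_zero_of_indepFun {Y Z : Ω → ι → ℝ} (hYZ : Y ⟂ᵢ[P] Z)
    (hY : AEStronglyMeasurable Y P) (hZ : AEStronglyMeasurable Z P)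
    (hint : ∀ i, Integrable (fun ω => Y ω i * Z ω i) P) (hZ₀ : ∀ i, ∫ ω, Z ω i ∂P = 0) :
    ∫ ω, Y ω ⬝ᵥ Z ω ∂P = 0 := by
  rw [integral_dotProduct_of_indepFun hYZ hY hZ hint]
  simp only [hZ₀, dotProduct, mul_zero, Finset.sum_const_zero]

theorem integral_sub_two_mul_dotProduct_sub_dotProduct_self_sq [IsFiniteMeasure P] {A : Ω → ℝ}
    {Y N : Ω → ι → ℝ} (hA : MemLp A 2 P) (hY : MemLp Y 4 P) (hN : MemLp N 4 P)
    (hAYN : (fun ω => (A ω, Y ω)) ⟂ᵢ[P] N) (hN₁ : ∀ i, ∫ ω, N ω i ∂P = 0)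
    (hN₃ : ∀ i, ∫ ω, N ω ⬝ᵥ N ω * N ω i ∂P = 0) :
    ∫ ω, (A ω - 2 * (Y ω ⬝ᵥ N ω) - N ω ⬝ᵥ N ω) ^ 2 ∂P
      = ∫ ω, A ω ^ 2 ∂P + 4 * (secondMoment Y P * secondMoment N P).trace
        + (fourthMoment N P).trace - 2 * (secondMoment N P).trace * ∫ ω, A ω ∂P := by
  have hYN : MemLp (fun ω => Y ω ⬝ᵥ N ω) 2 P := memLp_dotProduct hY hN
  have hNN : MemLp (fun ω => N ω ⬝ᵥ N ω) 2 P := memLp_dotProduct hN hN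
  have hYNi (i : ι) : MemLp (fun ω => Y ω i * N ω i) 2 P := (hN.eval i).mul' (hY.eval i)
  have meas : Measurable fun w : ι → ℝ => w ⬝ᵥ w := by fun_prop
  have cross_signal : ∫ ω, A ω * (Y ω ⬝ᵥ N ω) ∂P = 0 := by
    simp_rw [← smul_eq_mul, ← smul_dotProduct]
    refine integral_dotProduct_eq_zero_of_indepFun
      (hAYN.comp (measurable_fst.smul measurable_snd) measurable_id)
      (hA.1.smul hY.1) hN.1 (fun i => ?_) hN₁
    exact (hA.integrable_mul (hYNi i)).congr (.of_forall fun ω => (mul_assoc _ _ _).symm)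
  have cross_noise : ∫ ω, (N ω ⬝ᵥ N ω) * (Y ω ⬝ᵥ N ω) ∂P = 0 := by
    simp_rw [← smul_eq_mul, ← dotProduct_smul]
    refine integral_dotProduct_eq_zero_of_indepFun
      (hAYN.comp measurable_snd (meas.smul measurable_id))
      hY.1 (hNN.1.smul hN.1) (fun i => ?_) hN₃
    exact (hNN.integrable_mul (hYNi i)).congr (.of_forall fun ω => mul_left_comm _ _ _)
  have signal_noise : ∫ ω, A ω * (N ω ⬝ᵥ N ω) ∂P = (∫ ω, A ω ∂P) * ∫ ω, N ω ⬝ᵥ N ω ∂P :=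
    (hAYN.comp measurable_fst meas).integral_fun_mul_eq_mul_integral hA.1 hNN.1
  have cross_sq : ∫ ω, (Y ω ⬝ᵥ N ω) ^ 2 ∂P = (secondMoment Y P * secondMoment N P).trace :=
    integral_dotProduct_sq_of_indepFun (hAYN.comp measurable_snd measurable_id) hY hN
  rw [integral_sub_two_mul_sub_sq hA hYN hNN, cross_signal, cross_noise, signal_noise, cross_sq,
    trace_fourthMoment hN, trace_secondMoment (hN.mono_exponent (by norm_num))]
  ring

end Independence

theorem stmt11_general {Ω ι κ : Type*} [MeasurableSpace Ω] {P : Measure Ω} [IsFiniteMeasure P]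
    [Fintype ι] [DecidableEq ι] [Fintype κ] {X : Ω → ι → ℝ} {N : Ω → κ → ℝ}
    (hX : MemLp X 4 P) (hN : MemLp N 4 P) (hXN : X ⟂ᵢ[P] N)
    (hN₁ : ∀ k, ∫ ω, N ω k ∂P = 0) (hN₃ : ∀ k, ∫ ω, N ω ⬝ᵥ N ω * N ω k ∂P = 0)
    (S : Matrix κ ι ℝ) :
    ∫ ω, (X ω ⬝ᵥ X ω - (S *ᵥ X ω + N ω) ⬝ᵥ (S *ᵥ X ω + N ω)) ^ 2 ∂P
      = (fourthMoment X P * ((Sᵀ * S) ⊗ₖ (Sᵀ * S))).trace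
        - 2 * (fourthMoment X P * ((1 : Matrix ι ι ℝ) ⊗ₖ (Sᵀ * S))).trace
        + (fourthMoment X P).trace
        + 4 * (secondMoment X P * (Sᵀ * secondMoment N P * S)).trace
        + (fourthMoment N P).trace
        - 2 * (secondMoment N P).trace * (secondMoment X P * (1 - Sᵀ * S)).trace := by
  have hX₂ : MemLp X 2 P := hX.mono_exponent (by norm_num)
  have hA : MemLp (fun ω => X ω ⬝ᵥ (1 - Sᵀ * S) *ᵥ X ω) 2 P :=
    memLp_dotProduct hX (memLp_mulVec _ hX)
  have meas : Measurable fun v : ι → ℝ => (v ⬝ᵥ (1 - Sᵀ * S) *ᵥ v, S *ᵥ v) := by fun_prop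
  simp_rw [dotProduct_self_sub_dotProduct_self_mulVec_add]
  rw [integral_sub_two_mul_dotProduct_sub_dotProduct_self_sq hA (memLp_mulVec S hX) hN
      (hXN.comp meas measurable_id) hN₁ hN₃,
    ← trace_fourthMoment_mul_one_sub_kronecker_one_sub hX, trace_fourthMoment_mul_kronecker hX,
    trace_secondMoment_mulVec_mul hX₂, trace_secondMoment_mul hX₂ (1 - Sᵀ * S)]
  simp only [sq]

section ProductSpace

variable {Ω Ω' ι : Type*} [MeasurableSpace Ω] [MeasurableSpace Ω'] {μ : Measure Ω} {ν : Measure Ω'}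

theorem secondMoment_comp_fst [SFinite μ] [IsProbabilityMeasure ν] (X : Ω → ι → ℝ) :
    secondMoment (fun z => X z.1) (μ.prod ν) = secondMoment X μ := by
  ext i j
  simpa [secondMoment_apply] using integral_fun_fst (μ := μ) (ν := ν) fun ω => X ω i * X ω j

theorem fourthMoment_comp_fst [SFinite μ] [IsProbabilityMeasure ν] (X : Ω → ι → ℝ) :
    fourthMoment (fun z => X z.1) (μ.prod ν) = fourthMoment X μ :=
  secondMoment_comp_fst fun ω => vec (vecMulVec (X ω) (X ω))

theorem secondMoment_comp_snd [IsProbabilityMeasure μ] [SFinite ν] (X : Ω' → ι → ℝ) :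
    secondMoment (fun z => X z.2) (μ.prod ν) = secondMoment X ν := by
  ext i j
  simpa [secondMoment_apply] using integral_fun_snd (μ := μ) (ν := ν) fun ω => X ω i * X ω j

theorem fourthMoment_comp_snd [IsProbabilityMeasure μ] [SFinite ν] (X : Ω' → ι → ℝ) :
    fourthMoment (fun z => X z.2) (μ.prod ν) = fourthMoment X ν :=
  secondMoment_comp_snd fun ω => vec (vecMulVec (X ω) (X ω))

end ProductSpace

section Gaussian

theorem secondMoment_pi {ι : Type*} [Fintype ι] [DecidableEq ι] {ρ : Measure ℝ}
    [IsProbabilityMeasure ρ] (hρ : ∫ y, y ∂ρ = 0) :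
    secondMoment (fun x : ι → ℝ => x) (Measure.pi fun _ => ρ) = (∫ y, y ^ 2 ∂ρ) • 1 := by
  ext i j
  rw [secondMoment_apply, Matrix.smul_apply, one_apply]
  split_ifs with h
  · subst h
    simp_rw [← sq, smul_eq_mul, mul_one]
    exact integral_comp_eval (μ := fun _ : ι => ρ) (f := fun y => y ^ 2) (by fun_prop)
  · have indep : iIndepFun (fun (i : ι) (x : ι → ℝ) => x i) (Measure.pi fun _ => ρ) :=
      iIndepFun_pi (X := fun _ : ι => (id : ℝ → ℝ)) fun _ => aemeasurable_id
    have mean : ∫ x : ι → ℝ, x i ∂(Measure.pi fun _ => ρ) = 0 :=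
      (integral_comp_eval (μ := fun _ : ι => ρ) (f := fun y => y) (by fun_prop)).trans hρ
    rw [(indep.indepFun h).integral_fun_mul_eq_mul_integral
      (measurable_pi_apply i).aestronglyMeasurable (measurable_pi_apply j).aestronglyMeasurable,
      mean, zero_mul, smul_zero]

theorem integral_eq_zero_of_odd {E : Type*} [MeasurableSpace E] [AddGroup E] [MeasurableNeg E]
    {μ : Measure E} [μ.IsNegInvariant] {f : E → ℝ} (hf : f.Odd) : ∫ x, f x ∂μ = 0 := by
  have h : ∫ x, f x ∂μ = -∫ x, f x ∂μ := by
    rw [← integral_neg, ← integral_neg_eq_self f]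
    simp only [hf _]
  linarith

theorem phi_dotProduct_phi (p : ℝ) {K : ℕ} (x : Fin K → ℝ) :
    phi p x ⬝ᵥ phi p x = ∑ k, |x k| ^ p := by
  refine Finset.sum_congr rfl fun k _ => ?_
  rw [phi, ← sq, ← Real.rpow_mul_natCast (abs_nonneg _), Nat.cast_ofNat,
    div_mul_cancel₀ p two_ne_zero]

variable (K : ℕ) (σ : ℝ)

instance isProbabilityMeasure_gaussPi : IsProbabilityMeasure (gaussPi K σ) := by
  unfold gaussPi; infer_instance

instance isNegInvariant_gaussianReal (v : NNReal) : (gaussianReal 0 v).IsNegInvariant :=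
  ⟨gaussianReal_map_neg.trans (by rw [neg_zero])⟩

instance isNegInvariant_gaussPi : (gaussPi K σ).IsNegInvariant := by
  unfold gaussPi; infer_instance

theorem secondMoment_gaussPi :
    secondMoment (fun x => x) (gaussPi K σ) = σ ^ 2 • (1 : Matrix (Fin K) (Fin K) ℝ) := by
  have variance : ∫ y, y ^ 2 ∂(gaussianReal 0 (σ ^ 2).toNNReal) = σ ^ 2 := by
    rw [← variance_of_integral_eq_zero (by fun_prop) integral_id_gaussianReal,
      variance_fun_id_gaussianReal, Real.coe_toNNReal _ (sq_nonneg σ)]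
  rw [gaussPi, secondMoment_pi integral_id_gaussianReal, variance]

theorem memLp_id_gaussPi {q : ENNReal} (hq : q ≠ ⊤) : MemLp (fun x => x) q (gaussPi K σ) :=
  memLp_pi_iff.2 fun k => (memLp_id_gaussianReal' q hq).comp_measurePreserving
    (measurePreserving_eval (fun _ : Fin K => gaussianReal 0 (σ ^ 2).toNNReal) k)

theorem memLp_phi {p : ℝ} (hp : 0 < p) {q : ENNReal} (hq : q ≠ ⊤) :
    MemLp (phi p) q (gaussPi K σ) := by
  have hr : 0 < p / 2 := by positivity
  refine memLp_pi_iff.2 fun k => ?_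
  have h := ((memLp_id_gaussPi K σ (ENNReal.mul_ne_top hq
    (ENNReal.ofReal_ne_top (r := p / 2)))).eval k).norm_rpow_div (ENNReal.ofReal (p / 2))
  rwa [ENNReal.mul_div_cancel_right (by simpa using hr) ENNReal.ofReal_ne_top,
    ENNReal.toReal_ofReal hr.le] at h

end Gaussian

section JointLaw

variable (p : ℝ) (K M : ℕ) (σx σn : ℝ)

instance isProbabilityMeasure_jointMeas : IsProbabilityMeasure (jointMeas K M σx σn) := by
  unfold jointMeas; infer_instance

theorem secondMoment_signal :
    secondMoment (fun z => phi p z.1) (jointMeas K M σx σn) = Cmat p σx K :=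
  secondMoment_comp_fst (phi p)

theorem fourthMoment_signal :
    fourthMoment (fun z => phi p z.1) (jointMeas K M σx σn) = Mmat p σx K :=
  fourthMoment_comp_fst (phi p)

theorem secondMoment_noise :
    secondMoment (fun z => z.2) (jointMeas K M σx σn) = σn ^ 2 • (1 : Matrix (Fin M) (Fin M) ℝ) :=
  (secondMoment_comp_snd fun n => n).trans (secondMoment_gaussPi M σn)

theorem trace_secondMoment_noise :
    (secondMoment (fun z => z.2) (jointMeas K M σx σn)).trace = M * σn ^ 2 := by
  rw [secondMoment_noise, trace_smul, trace_one, Fintype.card_fin, smul_eq_mul, mul_comm]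

theorem transpose_mul_secondMoment_noise_mul (S : Matrix (Fin M) (Fin K) ℝ) :
    Sᵀ * secondMoment (fun z => z.2) (jointMeas K M σx σn) * S = σn ^ 2 • (Sᵀ * S) := by
  rw [secondMoment_noise, Matrix.mul_smul, Matrix.mul_one, Matrix.smul_mul]

theorem fourthMoment_noise :
    fourthMoment (fun z => z.2) (jointMeas K M σx σn) = Nmat σn M :=
  fourthMoment_comp_snd fun n => n

theorem integral_noise_eq_zero_of_odd {f : (Fin M → ℝ) → ℝ} (hf : f.Odd) :
    ∫ z, f z.2 ∂(jointMeas K M σx σn) = 0 := by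
  rw [jointMeas, integral_fun_snd, integral_eq_zero_of_odd hf, smul_zero]

theorem integral_noise_apply (k : Fin M) : ∫ z, z.2 k ∂(jointMeas K M σx σn) = 0 :=
  integral_noise_eq_zero_of_odd K M σx σn (f := fun n => n k) fun _ => rfl

theorem integral_noise_dotProduct_self_mul_apply (k : Fin M) :
    ∫ z, z.2 ⬝ᵥ z.2 * z.2 k ∂(jointMeas K M σx σn) = 0 :=
  integral_noise_eq_zero_of_odd K M σx σn (f := fun n => n ⬝ᵥ n * n k) fun n => by
    simp only [neg_dotProduct_neg, Pi.neg_apply, mul_neg]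

variable {p}

theorem memLp_signal (hp : 0 < p) {q : ENNReal} (hq : q ≠ ⊤) :
    MemLp (fun z => phi p z.1) q (jointMeas K M σx σn) :=
  (memLp_phi K σx hp hq).comp_measurePreserving measurePreserving_fst

theorem memLp_noise {q : ENNReal} (hq : q ≠ ⊤) :
    MemLp (fun z => z.2) q (jointMeas K M σx σn) :=
  (memLp_id_gaussPi M σn hq).comp_measurePreserving measurePreserving_snd

theorem indepFun_signal_noise :
    (fun z => phi p z.1) ⟂ᵢ[jointMeas K M σx σn] fun z => z.2 :=
  indepFun_prod (by unfold phi; fun_prop) measurable_id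

end JointLaw

/-- The mean squared error of the energy-detector estimate:
`E[(Σₖ|x_k|^p − ‖Sφ_p(x)+n‖₂²)²] = tr{𝐌(SᵀS⊗SᵀS)} − 2tr{𝐌(I⊗SᵀS)} + tr{𝐌}
  + 4σ_n² tr{C SᵀS} + tr{N} − 2Mσ_n² tr{C(I − SᵀS)}`. -/
theorem stmt11 (p σx σn : ℝ) (hp : 0 < p) (hσx : 0 < σx) (hσn : 0 < σn) (K M : ℕ)
    (S : Matrix (Fin M) (Fin K) ℝ) :
    ∫ z, ((∑ k, |z.1 k| ^ p) - ∑ m, ((S *ᵥ phi p z.1 + z.2) m) ^ 2) ^ 2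
        ∂(jointMeas K M σx σn)
      = (Mmat p σx K * ((Sᵀ * S) ⊗ₖ (Sᵀ * S))).trace
        - 2 * (Mmat p σx K * ((1 : Matrix (Fin K) (Fin K) ℝ) ⊗ₖ (Sᵀ * S))).trace
        + (Mmat p σx K).trace
        + 4 * σn ^ 2 * (Cmat p σx K * (Sᵀ * S)).trace
        + (Nmat σn M).trace
        - 2 * (M : ℝ) * σn ^ 2
            * (Cmat p σx K * ((1 : Matrix (Fin K) (Fin K) ℝ) - Sᵀ * S)).trace := by
  have mse := stmt11_general (memLp_signal K M σx σn hp (by norm_num))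
    (memLp_noise K M σx σn (by norm_num)) (indepFun_signal_noise K M σx σn)
    (integral_noise_apply K M σx σn) (integral_noise_dotProduct_self_mul_apply K M σx σn) S
  simp_rw [sum_sq_eq_dotProduct_self, ← phi_dotProduct_phi, mse, fourthMoment_signal,
    secondMoment_signal, fourthMoment_noise, trace_secondMoment_noise,
    transpose_mul_secondMoment_noise_mul, Matrix.mul_smul, trace_smul, smul_eq_mul]
  ring
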